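/- Let 𝕄 = ⟨M, 𝒞⟩ be a countable transitive model of GB⁻ and let ℙ be a notion of class forcing for 𝕄 which adds no new sets, i.e. M[G] = M for every ℙ-generic filter G over 𝕄. Then ℙ has the set decision property. -/

import Mathlib

noncomputable section

namespace CF

open scoped ZFSet

attribute [local instance] Classical.propDecidable

/-! ### First-order formulas of the language of set theory -/

/-- First-order `∈`-formulas with variables indexed by `ℕ`. -/
inductive EFormula : Type
  | mem : ℕ → ℕ → EFormula
  | eq : ℕ → ℕ → EFormula
  | not : EFormula → EFormula
  | or : EFormula → EFormula → EFormula
  | ex : ℕ → EFormula → EFormula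

/-- Satisfaction of an `∈`-formula in the structure `⟨D, ∈⟩` under assignment `v`. -/
def EFormula.Sat (D : Set ZFSet) (v : ℕ → ZFSet) : EFormula → Prop
  | .mem i j => v i ∈ v j
  | .eq i j => v i = v j
  | .not φ => ¬ EFormula.Sat D v φ
  | .or φ ψ => EFormula.Sat D v φ ∨ EFormula.Sat D v ψ
  | .ex i φ => ∃ x ∈ D, EFormula.Sat D (Function.update v i x) φ

/-- All variables occurring in the formula are `< m`. -/
def EFormula.VarsLt (m : ℕ) : EFormula → Prop
  | .mem i j => i < m ∧ j < m
  | .eq i j => i < m ∧ j < m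
  | .not φ => EFormula.VarsLt m φ
  | .or φ ψ => EFormula.VarsLt m φ ∧ EFormula.VarsLt m ψ
  | .ex i φ => i < m ∧ EFormula.VarsLt m φ

/-- First-order formulas of the two-sorted language of `GB⁻`: set variables indexed by `ℕ`,
class parameters indexed by `ℕ`, and only set quantifiers. -/
inductive GBFormula : Type
  | mem : ℕ → ℕ → GBFormula
  | eq : ℕ → ℕ → GBFormula
  | cls : ℕ → ℕ → GBFormula    -- `vᵢ ∈ C_j`
  | not : GBFormula → GBFormula
  | or : GBFormula → GBFormula → GBFormula
  | ex : ℕ → GBFormula → GBFormula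

/-- Satisfaction of a `GBFormula` with set quantifiers ranging over `Mset`,
class parameters `Cs` and set assignment `v`. -/
def GBFormula.Sat (Mset : Set ZFSet) (Cs : ℕ → Set ZFSet) (v : ℕ → ZFSet) : GBFormula → Prop
  | .mem i j => v i ∈ v j
  | .eq i j => v i = v j
  | .cls i j => v i ∈ Cs j
  | .not φ => ¬ GBFormula.Sat Mset Cs v φ
  | .or φ ψ => GBFormula.Sat Mset Cs v φ ∨ GBFormula.Sat Mset Cs v ψ
  | .ex i φ => ∃ x ∈ Mset, GBFormula.Sat Mset Cs (Function.update v i x) φ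

/-! ### Countable transitive models of GB⁻ -/

/-- A countable transitive second-order model `𝕄 = ⟨M, 𝒞⟩` of `GB⁻`:
`M` is transitive and countable, classes are subsets of `M`, sets are classes, and the axioms
of `GB⁻` hold (extensionality and foundation are automatic for `ZFSet`; the set axioms of `ZF⁻`
with separation and collection allowing class parameters, together with first-order class
comprehension, are listed). -/
structure GBModel.{u_1} where
  M : Set ZFSet.{u_1}
  Cls : Set (Set ZFSet)
  countable_M : M.Countable
  countable_Cls : Cls.Countable
  transitive : ∀ x ∈ M, ∀ y : ZFSet, y ∈ x → y ∈ M
  sets_are_classes : ∀ x ∈ M, x.toSet ∈ Cls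
  classes_sub : ∀ C ∈ Cls, C ⊆ M
  empty_mem : (∅ : ZFSet) ∈ M
  pair_mem : ∀ x ∈ M, ∀ y ∈ M, ({x, y} : ZFSet) ∈ M
  sUnion_mem : ∀ x ∈ M, (⋃₀ x : ZFSet) ∈ M
  omega_mem : ZFSet.omega ∈ M
  comprehension : ∀ (φ : GBFormula) (v : ℕ → ZFSet) (Cs : ℕ → Set ZFSet),
    (∀ n, v n ∈ M) → (∀ n, Cs n ∈ Cls) →
    {x : ZFSet | x ∈ M ∧ GBFormula.Sat M Cs (Function.update v 0 x) φ} ∈ Cls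
  separation : ∀ C ∈ Cls, ∀ a ∈ M, ∃ b ∈ M, ∀ x : ZFSet, x ∈ b ↔ x ∈ a ∧ x ∈ C
  collection : ∀ C ∈ Cls, ∀ a ∈ M,
    (∀ x : ZFSet, x ∈ a → ∃ y ∈ M, x.pair y ∈ C) →
    ∃ b ∈ M, ∀ x : ZFSet, x ∈ a → ∃ y : ZFSet, y ∈ b ∧ x.pair y ∈ C

/-- A notion of class forcing `ℙ = ⟨P, ≤_ℙ⟩` for `𝕄`: a partial order (with maximal element
`𝟙_ℙ`) whose domain and order relation are classes of `𝕄`. -/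
structure ClassForcing (𝕄 : GBModel) where
  P : Set ZFSet
  le : ZFSet → ZFSet → Prop
  one : ZFSet
  one_mem : one ∈ P
  le_one : ∀ p ∈ P, le p one
  le_refl : ∀ p ∈ P, le p p
  le_trans : ∀ p q r : ZFSet, le p q → le q r → le p r
  P_cls : P ∈ 𝕄.Cls
  le_cls : {x : ZFSet | ∃ p ∈ P, ∃ q ∈ P, le p q ∧ x = p.pair q} ∈ 𝕄.Cls

/-! ### Names and their evaluation -/

/-- Auxiliary rank-bounded version of `IsName`. -/
def IsNameAux (S : Set ZFSet) (o : Ordinal) (σ : ZFSet) : Prop :=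
  ∀ x ∈ σ.toSet, ∃ τ p : ZFSet, x = τ.pair p ∧ p ∈ S ∧
    ∃ _h : τ.rank < o, IsNameAux S τ.rank τ
termination_by o

/-- `σ` is a `ℙ`-name (for the forcing with conditions `S`): every element of `σ` is a pair
`⟨τ, p⟩` with `τ` a `ℙ`-name and `p ∈ S`. -/
def IsName (S : Set ZFSet) (σ : ZFSet) : Prop := IsNameAux S σ.rank σ

/-- Image of a ZFSet under an arbitrary function (using choice for definability). -/
def zimage (f : ZFSet → ZFSet) (x : ZFSet) : ZFSet :=
  @ZFSet.image f (Classical.allZFSetDefinable _) x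

/-- Auxiliary rank-bounded version of the evaluation `σ^G` of a name by a filter. -/
def nameEvalAux (G : Set ZFSet) (o : Ordinal) (σ : ZFSet) : ZFSet :=
  zimage (fun τ => if h : τ.rank < o then nameEvalAux G τ.rank τ else ∅)
    (ZFSet.sep (fun τ => ∃ p, p ∈ G ∧ τ.pair p ∈ σ) (⋃₀ ⋃₀ σ))
termination_by o
decreasing_by exact h

/-- The evaluation `σ^G = {τ^G | ∃ p ∈ G, ⟨τ, p⟩ ∈ σ}` of a name `σ` by a filter `G`. -/
def nameEval (G : Set ZFSet) (σ : ZFSet) : ZFSet := nameEvalAux G σ.rank σ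

/-- Auxiliary rank-bounded version of `nameTC`. -/
def nameTCAux (o : Ordinal) (σ : ZFSet) : Set ZFSet :=
  {x | ∃ τ p : ZFSet, τ.pair p ∈ σ ∧ (x = p ∨ ∃ _h : τ.rank < o, x ∈ nameTCAux τ.rank τ)}
termination_by o

/-- The set `tc(σ) = ⋃ {{p} ∪ tc(τ) | ⟨τ,p⟩ ∈ σ}` of conditions appearing in the transitive
closure of the name `σ`. -/
def nameTC (σ : ZFSet) : Set ZFSet := nameTCAux σ.rank σ

/-! ### Filters, genericity, generic extensions -/

/-- `G` is a filter on the partial order with domain `S` and ordering `le`. -/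
def IsFilterOn (S : Set ZFSet) (le : ZFSet → ZFSet → Prop) (G : Set ZFSet) : Prop :=
  G ⊆ S ∧ G.Nonempty ∧ (∀ p ∈ G, ∀ q ∈ S, le p q → q ∈ G) ∧
    ∀ p ∈ G, ∀ q ∈ G, ∃ r ∈ G, le r p ∧ le r q

/-- `D` is a dense subclass of the partial order `⟨S, le⟩`. -/
def DenseIn (S : Set ZFSet) (le : ZFSet → ZFSet → Prop) (D : Set ZFSet) : Prop :=
  D ⊆ S ∧ ∀ p ∈ S, ∃ q ∈ D, le q p

/-- `G` is a generic filter on `⟨S, le⟩` over `𝕄`: a filter meeting every dense subclass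
of `⟨S, le⟩` lying in `𝒞`. -/
def IsGeneric (𝕄 : GBModel) (S : Set ZFSet) (le : ZFSet → ZFSet → Prop) (G : Set ZFSet) : Prop :=
  IsFilterOn S le G ∧ ∀ D ∈ 𝕄.Cls, DenseIn S le D → (G ∩ D).Nonempty

/-- The generic extension `M[G] = {σ^G | σ ∈ M a name for the forcing with domain S}`. -/
def MGen (𝕄 : GBModel) (S : Set ZFSet) (G : Set ZFSet) : Set ZFSet :=
  {x | ∃ σ : ZFSet, σ ∈ 𝕄.M ∧ IsName S σ ∧ nameEval G σ = x}

/-! ### Compatibility, the set decision property -/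

/-- `p` and `q` are compatible in `⟨S, le⟩`. -/
def Compat (S : Set ZFSet) (le : ZFSet → ZFSet → Prop) (p q : ZFSet) : Prop :=
  ∃ r ∈ S, le r p ∧ le r q

/-- `p ≤* q` : every extension of `p` is compatible with `q`. -/
def leStar (S : Set ZFSet) (le : ZFSet → ZFSet → Prop) (p q : ZFSet) : Prop :=
  ∀ r ∈ S, le r p → Compat S le r q

/-- `p` decides the set of conditions `A`: for every `a ∈ A`, either `p ≤* a` or `p ⊥ a`. -/
def Decides (S : Set ZFSet) (le : ZFSet → ZFSet → Prop) (p A : ZFSet) : Prop :=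
  ∀ a : ZFSet, a ∈ A → leStar S le p a ∨ ¬ Compat S le p a

/-- The set decision property: every set of conditions in `M` is decided densely. -/
def SetDecisionProperty (𝕄 : GBModel) (F : ClassForcing 𝕄) : Prop :=
  ∀ p ∈ F.P, ∀ A : ZFSet, A ∈ 𝕄.M → (∀ a : ZFSet, a ∈ A → a ∈ F.P) →
    ∃ q ∈ F.P, F.le q p ∧ Decides F.P F.le q A

/-! ### The forcing theorem -/

/-- Encode a finite list of sets as a single set by iterated Kuratowski pairing. -/
def listEncode : List ZFSet → ZFSet
  | [] => ∅
  | a :: l => a.pair (listEncode l)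

/-- The assignment sending variable `n < m` to `σₙ^G` (and `∅` beyond `m`). -/
def namesAssign (G : Set ZFSet) (m : ℕ) (σs : Fin m → ZFSet) : ℕ → ZFSet :=
  fun n => if h : n < m then nameEval G (σs ⟨n, h⟩) else ∅

/-- `p ⊩_ℙ φ(σ₀, …, σ_{m-1})` : for every generic `G ∋ p`, `M[G] ⊨ φ(σ₀^G, …, σ_{m-1}^G)`. -/
def Forces (𝕄 : GBModel) (F : ClassForcing 𝕄) (φ : EFormula) (m : ℕ) (p : ZFSet)
    (σs : Fin m → ZFSet) : Prop :=
  ∀ G : Set ZFSet, IsGeneric 𝕄 F.P F.le G → p ∈ G →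
    EFormula.Sat (MGen 𝕄 F.P G) (namesAssign G m σs) φ

/-- `ℙ` satisfies the forcing theorem over `𝕄`: for every `∈`-formula `φ(v₀,…,v_{m-1})`,
the forcing relation is a class of `𝕄` (definability lemma) and everything true in a generic
extension is forced by a condition in the generic filter (truth lemma). -/
def SatisfiesForcingTheorem (𝕄 : GBModel) (F : ClassForcing 𝕄) : Prop :=
  ∀ (φ : EFormula) (m : ℕ), EFormula.VarsLt m φ →
    ({x : ZFSet | ∃ p ∈ F.P, ∃ σs : Fin m → ZFSet,
        (∀ i, σs i ∈ 𝕄.M ∧ IsName F.P (σs i)) ∧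
        Forces 𝕄 F φ m p σs ∧
        x = p.pair (listEncode (List.ofFn σs))} ∈ 𝕄.Cls) ∧
    ∀ σs : Fin m → ZFSet, (∀ i, σs i ∈ 𝕄.M ∧ IsName F.P (σs i)) →
      ∀ G : Set ZFSet, IsGeneric 𝕄 F.P F.le G →
        EFormula.Sat (MGen 𝕄 F.P G) (namesAssign G m σs) φ →
        ∃ p ∈ G, Forces 𝕄 F φ m p σs

/-! ### Complete subforcings, the set reduction property -/

/-- `A` is an antichain of the partial order `⟨S, le⟩`. -/
def IsAntichainIn (S : Set ZFSet) (le : ZFSet → ZFSet → Prop) (A : Set ZFSet) : Prop :=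
  A ⊆ S ∧ ∀ p ∈ A, ∀ q ∈ A, p ≠ q → ¬ Compat S le p q

/-- `A` is a maximal antichain of the partial order `⟨S, le⟩`. -/
def IsMaxAntichainIn (S : Set ZFSet) (le : ZFSet → ZFSet → Prop) (A : Set ZFSet) : Prop :=
  IsAntichainIn S le A ∧ ∀ p ∈ S, ∃ a ∈ A, Compat S le p a

/-- `ℚ ⊲∘ ℙ` : `Q` is a set-sized complete subforcing of `ℙ` (with the induced ordering):
`Q ∈ M`, `Q ⊆ P`, `𝟙 ∈ Q`, and every maximal antichain of `ℚ` in `M` is predense in `ℙ`. -/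
def IsCompleteSub (𝕄 : GBModel) (F : ClassForcing 𝕄) (Q : ZFSet) : Prop :=
  Q ∈ 𝕄.M ∧ Q.toSet ⊆ F.P ∧ F.one ∈ Q ∧
    ∀ A : ZFSet, A ∈ 𝕄.M → A.toSet ⊆ Q.toSet → IsMaxAntichainIn Q.toSet F.le A.toSet →
      ∀ p ∈ F.P, ∃ a : ZFSet, a ∈ A ∧ Compat F.P F.le p a

/-- `ℚ^{∥q}` : the conditions of `Q` compatible with `q` in `ℙ`. -/
def QPar (𝕄 : GBModel) (F : ClassForcing 𝕄) (Q : ZFSet) (q : ZFSet) : Set ZFSet :=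
  {r | r ∈ Q ∧ Compat F.P F.le r q}

/-- The property `(*)(A, q, ℚ)`: for every `a ∈ A`, the set of `r ∈ ℚ^{∥q}` such that either
all `s ≤ q, r` satisfy `s ≤* a`, or all `s ≤ q, r` satisfy `s ⊥ a`, is dense in `ℚ^{∥q}`. -/
def StarProp (𝕄 : GBModel) (F : ClassForcing 𝕄) (A q Q : ZFSet) : Prop :=
  ∀ a : ZFSet, a ∈ A → ∀ r₀ ∈ QPar 𝕄 F Q q, ∃ r₁ ∈ QPar 𝕄 F Q q, F.le r₁ r₀ ∧
    ((∀ s ∈ F.P, F.le s q → F.le s r₁ → leStar F.P F.le s a) ∨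
      (∀ s ∈ F.P, F.le s q → F.le s r₁ → ¬ Compat F.P F.le s a))

/-- The set reduction property. -/
def SetReductionProperty (𝕄 : GBModel) (F : ClassForcing 𝕄) : Prop :=
  ∀ A : ZFSet, A ∈ 𝕄.M → (∀ a : ZFSet, a ∈ A → a ∈ F.P) →
    ∀ p ∈ F.P, ∃ q ∈ F.P, F.le q p ∧ ∃ Q : ZFSet, IsCompleteSub 𝕄 F Q ∧ StarProp 𝕄 F A q Q

/-- Every new set added by `ℙ` is added by a set-sized complete subforcing of `ℙ`. -/
def EveryNewSetBySub (𝕄 : GBModel) (F : ClassForcing 𝕄) : Prop :=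
  ∀ G : Set ZFSet, IsGeneric 𝕄 F.P F.le G →
    ∀ x : ZFSet, x ∈ MGen 𝕄 F.P G → x ∉ 𝕄.M →
      ∃ Q : ZFSet, IsCompleteSub 𝕄 F Q ∧ x ∈ MGen 𝕄 Q.toSet (G ∩ Q.toSet)

/-! ### The q-reduction of a name -/

/-- First component of a Kuratowski pair (junk value `∅` otherwise). -/
def fstZ (x : ZFSet) : ZFSet :=
  if h : ∃ a b : ZFSet, x = a.pair b then h.choose else ∅

/-- Second component of a Kuratowski pair (junk value `∅` otherwise). -/
def sndZ (x : ZFSet) : ZFSet :=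
  if h : ∃ a b : ZFSet, x = a.pair b then h.choose_spec.choose else ∅

/-- Cartesian product of two `ZFSet`s. -/
def zprod (a b : ZFSet) : ZFSet :=
  ZFSet.sep (fun x => ∃ u v : ZFSet, u ∈ a ∧ v ∈ b ∧ x = u.pair v)
    (ZFSet.powerset (ZFSet.powerset (a ∪ b)))

/-- Auxiliary rank-bounded version of the `q`-reduction of a name to `Q`. -/
def reduceAux (S : Set ZFSet) (le : ZFSet → ZFSet → Prop) (Q q : ZFSet) (o : Ordinal)
    (σ : ZFSet) : ZFSet :=
  zimage
    (fun x =>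
      (if h : (fstZ x).rank < o then reduceAux S le Q q (fstZ x).rank (fstZ x) else ∅).pair
        (sndZ x))
    (ZFSet.sep
      (fun x => ∃ τ r : ZFSet, x = τ.pair r ∧ r ∈ Q ∧
        ∃ a : ZFSet, τ.pair a ∈ σ ∧ ∀ s ∈ S, le s q → le s r → leStar S le s a)
      (zprod (⋃₀ ⋃₀ σ) Q))
termination_by o
decreasing_by exact h

/-- The `q`-reduction `σ_q^ℚ = {⟨τ_q^ℚ, r⟩ | r ∈ ℚ ∧ ∃a (⟨τ,a⟩ ∈ σ ∧ ∀ s ≤ q,r (s ≤* a))}`. -/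
def reduceName (S : Set ZFSet) (le : ZFSet → ZFSet → Prop) (Q q σ : ZFSet) : ZFSet :=
  reduceAux S le Q q σ.rank σ

/-! ### Projections -/

/-- `f` is a projection from `⟨S, le⟩` (with maximum `one`) onto the subforcing with domain
`Qs`, respecting `X`. -/
def IsProjectionResp (S : Set ZFSet) (le : ZFSet → ZFSet → Prop) (one : ZFSet)
    (Qs X : Set ZFSet) (f : ZFSet → ZFSet) : Prop :=
  (∀ p ∈ S, f p ∈ Qs) ∧
  f one = one ∧
  (∀ p ∈ S, ∀ q ∈ S, le p q → le (f p) (f q)) ∧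
  (∀ p ∈ S, ∀ q ∈ Qs, le q (f p) → ∃ r ∈ S, le r p ∧ le (f r) q) ∧
  (∀ p ∈ X, ∀ q ∈ S, le (f q) p → le q p) ∧
  (∀ p ∈ X, f p = p)

/-- `ℙ` is approachable by projections: there is a class `Π ∈ 𝒞` whose sections `π_{X,y}`
are such that for every set `X ⊆ ℙ` there are a set `y` and a set-sized subforcing `ℚ ⊇ X ∪ {𝟙}`
of `ℙ` with `π_{X,y} : ℙ → ℚ` a projection respecting `X`. -/
def ApproachableByProjections (𝕄 : GBModel) (F : ClassForcing 𝕄) : Prop :=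
  ∃ Pi ∈ 𝕄.Cls, ∀ X : ZFSet, X ∈ 𝕄.M → (∀ x : ZFSet, x ∈ X → x ∈ F.P) →
    ∃ y ∈ 𝕄.M, ∃ Q : ZFSet, Q ∈ 𝕄.M ∧ Q.toSet ⊆ F.P ∧ (∀ x : ZFSet, x ∈ X → x ∈ Q) ∧
      F.one ∈ Q ∧ ∃ f : ZFSet → ZFSet,
        (∀ u ∈ F.P, ∀ v : ZFSet, (f u = v ↔ X.pair (y.pair (u.pair v)) ∈ Pi)) ∧
        IsProjectionResp F.P F.le F.one Q.toSet X.toSet f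

/-- `p ⊩ σ ⊆ τ` for the forcing with domain `S` and ordering `le`. -/
def ForcesSubset (𝕄 : GBModel) (S : Set ZFSet) (le : ZFSet → ZFSet → Prop)
    (p σ τ : ZFSet) : Prop :=
  ∀ G : Set ZFSet, IsGeneric 𝕄 S le G → p ∈ G → nameEval G σ ⊆ nameEval G τ

/-! ### Bounded names, turning proper classes into sets -/

/-- The possible values of the name `σ` in generic extensions. -/
def PossibleValues (𝕄 : GBModel) (S : Set ZFSet) (le : ZFSet → ZFSet → Prop)
    (σ : ZFSet) : Set ZFSet :=
  {x | ∃ G : Set ZFSet, IsGeneric 𝕄 S le G ∧ nameEval G σ = x}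

/-- The name `σ` is bounded: some `A ∈ M` covers all its possible values lying in `M`. -/
def IsBoundedName (𝕄 : GBModel) (F : ClassForcing 𝕄) (σ : ZFSet) : Prop :=
  ∃ A ∈ 𝕄.M, PossibleValues 𝕄 F.P F.le σ ∩ 𝕄.M ⊆ A.toSet

/-- `ℙ` has bounded names: every `ℙ`-name in `M` is bounded. -/
def HasBoundedNames (𝕄 : GBModel) (F : ClassForcing 𝕄) : Prop :=
  ∀ σ : ZFSet, σ ∈ 𝕄.M → IsName F.P σ → IsBoundedName 𝕄 F σ

/-- `X` is a proper class of `𝕄`: a class of `𝕄` that is not (the extension of) a set of `𝕄`. -/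
def IsProperClass (𝕄 : GBModel) (X : Set ZFSet) : Prop :=
  X ∈ 𝕄.Cls ∧ ¬ ∃ x ∈ 𝕄.M, x.toSet = X

/-- The proper class `X` of `𝕄` is turned into a set by forcing with `ℙ`: some `ℙ`-name in `M`
evaluates to `X` under some generic filter. -/
def TurnsIntoSet (𝕄 : GBModel) (F : ClassForcing 𝕄) (X : Set ZFSet) : Prop :=
  ∃ σ : ZFSet, σ ∈ 𝕄.M ∧ IsName F.P σ ∧
    ∃ G : Set ZFSet, IsGeneric 𝕄 F.P F.le G ∧ (nameEval G σ).toSet = X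

/-! ### Functions and partial functions as sets, collapse forcings -/

/-- `p` is a partial function from (a subset of) `γ` into the class `Y`. -/
def IsPFunOn (p γ : ZFSet) (Y : Set ZFSet) : Prop :=
  (∀ x : ZFSet, x ∈ p → ∃ a b : ZFSet, x = a.pair b ∧ a ∈ γ ∧ b ∈ Y) ∧
  ∀ a b b' : ZFSet, a.pair b ∈ p → a.pair b' ∈ p → b = b'

/-- The domain of a set of pairs. -/
def pdom (p : ZFSet) : Set ZFSet := {a | ∃ b : ZFSet, a.pair b ∈ p}

/-- `f` is (the graph of) an injective function from `X` into `Y`. -/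
def ZInjFun (f : ZFSet) (X Y : Set ZFSet) : Prop :=
  (∀ x : ZFSet, x ∈ f → ∃ a b : ZFSet, x = a.pair b ∧ a ∈ X ∧ b ∈ Y) ∧
  (∀ a b b' : ZFSet, a.pair b ∈ f → a.pair b' ∈ f → b = b') ∧
  (∀ a ∈ X, ∃ b : ZFSet, a.pair b ∈ f) ∧
  (∀ a a' b : ZFSet, a.pair b ∈ f → a'.pair b ∈ f → a = a')

/-- `D` has size less than the cardinality of `γ` in the sense of `M`:
no function of `M` injects `γ` into `D`. -/
def SmallerThan (𝕄 : GBModel) (γ : ZFSet) (D : Set ZFSet) : Prop :=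
  ¬ ∃ f ∈ 𝕄.M, ZInjFun f γ.toSet D

/-- Conditions of `Col(γ, Y)^M`: partial functions of `M` from `γ` to `Y` whose domain has
size less than the cardinality of `γ` in `M`. -/
def ColCond (𝕄 : GBModel) (γ : ZFSet) (Y : Set ZFSet) (p : ZFSet) : Prop :=
  p ∈ 𝕄.M ∧ IsPFunOn p γ Y ∧ SmallerThan 𝕄 γ (pdom p)

/-- Conditions of `Col₋*(γ, Y)^M`: those conditions of `Col(γ, Y)^M` whose domain is
an ordinal. -/
def ColStarCond (𝕄 : GBModel) (γ : ZFSet) (Y : Set ZFSet) (p : ZFSet) : Prop :=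
  ColCond 𝕄 γ Y p ∧ ∃ β : ZFSet, β.IsOrdinal ∧ pdom p = β.toSet

/-- `f` is (the graph of) a function with domain `I`. -/
def ZFuncOn (f I : ZFSet) : Prop :=
  (∀ x : ZFSet, x ∈ f → ∃ a b : ZFSet, x = a.pair b ∧ a ∈ I) ∧
  (∀ a b b' : ZFSet, a.pair b ∈ f → a.pair b' ∈ f → b = b') ∧
  (∀ a : ZFSet, a ∈ I → ∃ b : ZFSet, a.pair b ∈ f)

/-- Application of a set-function to an argument (junk value `∅` if undefined). -/
def zapp (f i : ZFSet) : ZFSet :=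
  if h : ∃ b : ZFSet, i.pair b ∈ f then h.choose else ∅

/-! ### Pretameness -/

/-- `ℙ` is pretame for `𝕄`: for every `p ∈ ℙ`, `I ∈ M` and every `𝒞`-coded sequence
`⟨D_i | i ∈ I⟩` (coded as the class of pairs `⟨i, x⟩` with `x ∈ D_i`) of dense subclasses
of `ℙ`, there are `q ≤ p` and `⟨d_i | i ∈ I⟩ ∈ M` with `d_i ⊆ D_i` predense below `q`. -/
def Pretame (𝕄 : GBModel) (F : ClassForcing 𝕄) : Prop :=
  ∀ p ∈ F.P, ∀ I : ZFSet, I ∈ 𝕄.M → ∀ D ∈ 𝕄.Cls,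
    (∀ i : ZFSet, i ∈ I →
      (∀ x : ZFSet, i.pair x ∈ D → x ∈ F.P) ∧ ∀ r ∈ F.P, ∃ s : ZFSet, i.pair s ∈ D ∧ F.le s r) →
    ∃ q ∈ F.P, F.le q p ∧ ∃ d ∈ 𝕄.M, ZFuncOn d I ∧
      ∀ i : ZFSet, i ∈ I → (∀ x : ZFSet, x ∈ zapp d i → i.pair x ∈ D) ∧
        ∀ r ∈ F.P, F.le r q → ∃ a : ZFSet, a ∈ zapp d i ∧ Compat F.P F.le r a

/-! ### The specific forcings of Sections 6 and 7 -/

/-- Conditions of Definition 6.8: (not necessarily finite) partial functions from `ω` to `2`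
lying in `M`. -/
def PCond (𝕄 : GBModel) (p : ZFSet) : Prop :=
  p ∈ 𝕄.M ∧ IsPFunOn p ZFSet.omega {x : ZFSet | x = ∅ ∨ x = ({∅} : ZFSet)}

/-- Conditions of the finite support product `ℚ` of `ω` many copies of `ℙ`:
finite sequences `⟨p₀, …, p_k⟩` of `ℙ`-conditions. -/
def QCond (𝕄 : GBModel) (s : ZFSet) : Prop :=
  s ∈ 𝕄.M ∧ ∃ n : ZFSet, n ∈ ZFSet.omega ∧ ZFuncOn s n ∧
    ∀ i : ZFSet, i ∈ n → PCond 𝕄 (zapp s i)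

/-- The coordinatewise ordering on `ℚ`. -/
def QLe (s' s : ZFSet) : Prop :=
  pdom s ⊆ pdom s' ∧ ∀ i ∈ pdom s, zapp s i ⊆ zapp s' i

/-- The power class `𝒫(ω)^M`. -/
def PowOmega (𝕄 : GBModel) : Set ZFSet :=
  {x : ZFSet | x ∈ 𝕄.M ∧ x ⊆ ZFSet.omega}

/-- `X ⊆ M` is definable over `⟨M, ∈⟩` (from set parameters). -/
def DefinableOver (Mset : Set ZFSet) (X : Set ZFSet) : Prop :=
  ∃ (φ : EFormula) (v : ℕ → ZFSet), (∀ n, v n ∈ Mset) ∧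
    X = {x : ZFSet | x ∈ Mset ∧ EFormula.Sat Mset (Function.update v 0 x) φ}

/-- Every set of `M` is countable in `M`: it injects into `ω` by a function of `M`. -/
def AllSetsCountable (𝕄 : GBModel) : Prop :=
  ∀ x ∈ 𝕄.M, ∃ f ∈ 𝕄.M, ZInjFun f x.toSet ZFSet.omega.toSet

/-!
Suppose no extension of `p` decides the set `A`. Below `p` one can then diagonalise against every
`x ∈ M`: a condition `q ≤ p` has extensions `r ≤ a` and `r' ⊥ a` for some common `a ∈ A`, and one
of them forces `G ∩ A ≠ x`, according to whether `a ∈ x`. As `M` and `𝒞` are countable, the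
Rasiowa–Sikorski lemma yields a generic `G` with `G ∩ A ∉ M`. On the other hand `G ∩ A` is the
evaluation of the name `{⟨ǎ, a⟩ | a ∈ A}`, so `G ∩ A ∈ M[G]`. That this name lies in `M` is the
recursion theorem for `x ↦ x̌` inside `𝕄`, carried out with set-sized approximations of its graph.
-/

/-! ### Definable relations -/

theorem mem_zimage {f : ZFSet → ZFSet} {x y : ZFSet} :
    y ∈ zimage f x ↔ ∃ z ∈ x, f z = y :=
  @ZFSet.mem_image f (Classical.allZFSetDefinable _) x y

namespace GBFormula

/-- Renaming of the class parameters of a formula, used to put two formulas with unrelated class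
parameters over a common list of parameters. -/
def mapCls (f : ℕ → ℕ) : GBFormula → GBFormula
  | .mem i j => .mem i j
  | .eq i j => .eq i j
  | .cls i j => .cls i (f j)
  | .not φ => .not (φ.mapCls f)
  | .or φ ψ => .or (φ.mapCls f) (ψ.mapCls f)
  | .ex i φ => .ex i (φ.mapCls f)

theorem sat_mapCls {D : Set ZFSet} {Cs : ℕ → Set ZFSet} {f : ℕ → ℕ} {φ : GBFormula}
    {v : ℕ → ZFSet} : (φ.mapCls f).Sat D Cs v ↔ φ.Sat D (Cs ∘ f) v := by
  induction φ generalizing v <;> simp only [mapCls, Sat, Function.comp_apply, *]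

end GBFormula

namespace GBModel

/-- The relation `R` on assignments of sets to variables is definable over `𝕄` by a first-order
formula with class parameters. Its arguments are addressed by variable number, and only its values
on assignments in `M` matter. Set parameters are class parameters, by `sets_are_classes`. -/
def Definable (𝕄 : GBModel) (R : (ℕ → ZFSet) → Prop) : Prop :=
  ∃ (φ : GBFormula) (Cs : ℕ → Set ZFSet), (∀ n, Cs n ∈ 𝕄.Cls) ∧
    ∀ v, (∀ n, v n ∈ 𝕄.M) → (φ.Sat 𝕄.M Cs v ↔ R v)

variable {𝕄 : GBModel} {R S : (ℕ → ZFSet) → Prop}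

theorem empty_mem_cls (𝕄 : GBModel) : ∅ ∈ 𝕄.Cls :=
  (ZFSet.coe_empty : (∅ : ZFSet).toSet = ∅) ▸ 𝕄.sets_are_classes ∅ 𝕄.empty_mem

theorem singleton_mem {x : ZFSet} (hx : x ∈ 𝕄.M) : {x} ∈ 𝕄.M :=
  ZFSet.pair_eq_singleton x ▸ 𝕄.pair_mem x hx x hx

theorem insert_mem {x y : ZFSet} (hx : x ∈ 𝕄.M) (hy : y ∈ 𝕄.M) : insert x y ∈ 𝕄.M := by
  have : insert x y = (⋃₀ {{x}, y} : ZFSet) := by ext; simp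
  exact this ▸ 𝕄.sUnion_mem _ (𝕄.pair_mem _ (singleton_mem hx) _ hy)

theorem pair_mem_iff {x y : ZFSet} : x.pair y ∈ 𝕄.M ↔ x ∈ 𝕄.M ∧ y ∈ 𝕄.M := by
  refine ⟨fun h ↦ ?_, fun ⟨hx, hy⟩ ↦ 𝕄.pair_mem _ (singleton_mem hx) _ (𝕄.pair_mem x hx y hy)⟩
  have hxy : {x, y} ∈ 𝕄.M := 𝕄.transitive _ h _ (by simp [ZFSet.pair])
  exact ⟨𝕄.transitive _ hxy _ (by simp), 𝕄.transitive _ hxy _ (by simp)⟩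

theorem update_mem {v : ℕ → ZFSet} (hv : ∀ n, v n ∈ 𝕄.M) {x : ZFSet} (hx : x ∈ 𝕄.M) (i n : ℕ) :
    Function.update v i x n ∈ 𝕄.M := by
  rcases eq_or_ne n i with rfl | hni
  · rwa [Function.update_self]
  · rw [Function.update_of_ne hni]
    exact hv n

namespace Definable

theorem congr (hR : 𝕄.Definable R) (h : ∀ v, (∀ n, v n ∈ 𝕄.M) → (R v ↔ S v)) :
    𝕄.Definable S := by
  obtain ⟨φ, Cs, hCs, hφ⟩ := hR
  exact ⟨φ, Cs, hCs, fun v hv ↦ (hφ v hv).trans (h v hv)⟩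

theorem mem (i j : ℕ) : 𝕄.Definable fun v ↦ v i ∈ v j :=
  ⟨.mem i j, fun _ ↦ ∅, fun _ ↦ 𝕄.empty_mem_cls, fun _ _ ↦ Iff.rfl⟩

theorem eq (i j : ℕ) : 𝕄.Definable fun v ↦ v i = v j :=
  ⟨.eq i j, fun _ ↦ ∅, fun _ ↦ 𝕄.empty_mem_cls, fun _ _ ↦ Iff.rfl⟩

theorem mem_cls {C : Set ZFSet} (hC : C ∈ 𝕄.Cls) (i : ℕ) : 𝕄.Definable fun v ↦ v i ∈ C :=
  ⟨.cls i 0, fun _ ↦ C, fun _ ↦ hC, fun _ _ ↦ Iff.rfl⟩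

theorem not (hR : 𝕄.Definable R) : 𝕄.Definable fun v ↦ ¬ R v := by
  obtain ⟨φ, Cs, hCs, hφ⟩ := hR
  exact ⟨.not φ, Cs, hCs, fun v hv ↦ not_congr (hφ v hv)⟩

theorem or (hR : 𝕄.Definable R) (hS : 𝕄.Definable S) : 𝕄.Definable fun v ↦ R v ∨ S v := by
  obtain ⟨φ, Cs, hCs, hφ⟩ := hR
  obtain ⟨ψ, Ds, hDs, hψ⟩ := hS
  let e := Equiv.natSumNatEquivNat
  have hl : Sum.elim Cs Ds ∘ e.symm ∘ e ∘ Sum.inl = Cs := by ext; simp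
  have hr : Sum.elim Cs Ds ∘ e.symm ∘ e ∘ Sum.inr = Ds := by ext; simp
  refine ⟨.or (φ.mapCls (e ∘ Sum.inl)) (ψ.mapCls (e ∘ Sum.inr)), Sum.elim Cs Ds ∘ e.symm,
    fun n ↦ ?_, fun v hv ↦ or_congr ?_ ?_⟩
  · rcases h : e.symm n with m | m <;> simp [h, hCs, hDs]
  · rw [GBFormula.sat_mapCls, Function.comp_assoc, hl, hφ v hv]
  · rw [GBFormula.sat_mapCls, Function.comp_assoc, hr, hψ v hv]

theorem and (hR : 𝕄.Definable R) (hS : 𝕄.Definable S) : 𝕄.Definable fun v ↦ R v ∧ S v :=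
  (hR.not.or hS.not).not.congr fun v _ ↦ by tauto

theorem imp (hR : 𝕄.Definable R) (hS : 𝕄.Definable S) : 𝕄.Definable fun v ↦ R v → S v :=
  (hR.not.or hS).congr fun v _ ↦ by tauto

theorem iff (hR : 𝕄.Definable R) (hS : 𝕄.Definable S) : 𝕄.Definable fun v ↦ (R v ↔ S v) :=
  ((hR.imp hS).and (hS.imp hR)).congr fun v _ ↦ by tauto

theorem ex (hR : 𝕄.Definable R) (i : ℕ) :
    𝕄.Definable fun v ↦ ∃ x ∈ 𝕄.M, R (Function.update v i x) := by
  obtain ⟨φ, Cs, hCs, hφ⟩ := hR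
  exact ⟨.ex i φ, Cs, hCs, fun v hv ↦ exists_congr fun x ↦ and_congr_right fun hx ↦
    hφ _ (update_mem hv hx i)⟩

theorem all (hR : 𝕄.Definable R) (i : ℕ) :
    𝕄.Definable fun v ↦ ∀ x ∈ 𝕄.M, R (Function.update v i x) :=
  (hR.not.ex i).not.congr fun v _ ↦ by push Not; rfl

theorem update_const (hR : 𝕄.Definable R) {c : ZFSet} (hc : c ∈ 𝕄.M) (i : ℕ) :
    𝕄.Definable fun v ↦ R (Function.update v i c) := by
  have hmem (x : ZFSet) : x ∈ ({c} : ZFSet).toSet ↔ x = c := ZFSet.mem_singleton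
  exact (((mem_cls (𝕄.sets_are_classes _ (singleton_mem hc)) i).and hR).ex i).congr fun v _ ↦ by
    simp [hmem, hc]

theorem eq_upair (i j k : ℕ) : 𝕄.Definable fun v ↦ v i = {v j, v k} := by
  let n := i + j + k + 1
  refine (((mem n i).iff ((eq n j).or (eq n k))).all n).congr fun v hv ↦ ?_
  simp (disch := omega) only [Function.update_self, Function.update_of_ne]
  rw [ZFSet.ext_iff]
  simp only [ZFSet.mem_pair]
  refine ⟨fun h x ↦ ⟨fun hx ↦ (h x (𝕄.transitive _ (hv i) x hx)).1 hx, fun hx ↦ ?_⟩,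
    fun h x _ ↦ h x⟩
  have hxM : x ∈ 𝕄.M := hx.elim (· ▸ hv j) (· ▸ hv k)
  exact (h x hxM).2 hx

theorem eq_pair (i j k : ℕ) : 𝕄.Definable fun v ↦ v i = (v j).pair (v k) := by
  let m := i + j + k + 1
  refine ((((eq_upair m j j).and ((eq_upair (m + 1) j k).and (eq_upair i m (m + 1)))).ex
    (m + 1)).ex m).congr fun v hv ↦ ?_
  simp (disch := omega) only [Function.update_self, Function.update_of_ne,
    ZFSet.pair_eq_singleton]
  constructor
  · rintro ⟨_, _, _, _, rfl, rfl, h⟩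
    exact h
  · exact fun h ↦ ⟨_, singleton_mem (hv j), _, 𝕄.pair_mem _ (hv j) _ (hv k), rfl, rfl, h⟩

theorem update_pair (hR : 𝕄.Definable R) (i j n : ℕ) (hi : i ≠ n := by omega)
    (hj : j ≠ n := by omega) :
    𝕄.Definable fun v ↦ R (Function.update v n ((v i).pair (v j))) :=
  (((eq_pair n i j).and hR).ex n).congr fun v hv ↦ by
    simp [Function.update_of_ne hi, Function.update_of_ne hj, pair_mem_iff, hv]

theorem pair_mem (i j k : ℕ) : 𝕄.Definable fun v ↦ (v i).pair (v j) ∈ v k :=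
  ((mem (i + j + k + 1) k).update_pair i j (i + j + k + 1)).congr fun v _ ↦ by
    simp (disch := omega) only [Function.update_self, Function.update_of_ne]

theorem pair_mem_cls {C : Set ZFSet} (hC : C ∈ 𝕄.Cls) (i j : ℕ) :
    𝕄.Definable fun v ↦ (v i).pair (v j) ∈ C :=
  ((mem_cls hC (i + j + 1)).update_pair i j (i + j + 1)).congr fun v _ ↦ by
    simp only [Function.update_self]

theorem exists_mem (hR : 𝕄.Definable R) (k n : ℕ) (hk : k ≠ n := by omega) :
    𝕄.Definable fun v ↦ ∃ x ∈ v k, R (Function.update v n x) :=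
  (((mem n k).and hR).ex n).congr fun v hv ↦ by
    simp only [Function.update_self, Function.update_of_ne hk]
    exact exists_congr fun x ↦ and_iff_right_of_imp fun hx ↦ 𝕄.transitive _ (hv k) x hx.1

theorem forall_mem (hR : 𝕄.Definable R) (k n : ℕ) (hk : k ≠ n := by omega) :
    𝕄.Definable fun v ↦ ∀ x ∈ v k, R (Function.update v n x) :=
  (hR.not.exists_mem k n).not.congr fun v _ ↦ by push Not; rfl

theorem exists_pair_mem (hR : 𝕄.Definable R) (i k n : ℕ) (hi : i ≠ n := by omega)
    (hk : k ≠ n := by omega) :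
    𝕄.Definable fun v ↦ ∃ y, (v i).pair y ∈ v k ∧ R (Function.update v n y) :=
  (((pair_mem i n k).and hR).ex n).congr fun v hv ↦ by
    simp only [Function.update_self, Function.update_of_ne hi, Function.update_of_ne hk]
    exact exists_congr fun y ↦ and_iff_right_of_imp fun hy ↦
      (pair_mem_iff.1 (𝕄.transitive _ (hv k) _ hy.1)).2

theorem forall_pair_mem (hR : 𝕄.Definable R) (k m n : ℕ) (hm : k ≠ m := by omega)
    (hn : k ≠ n := by omega) (hmn : m ≠ n := by omega) :
    𝕄.Definable fun v ↦
      ∀ x y, x.pair y ∈ v k → R (Function.update (Function.update v m x) n y) :=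
  ((((pair_mem m n k).imp hR).all n).all m).congr fun v hv ↦ by
    simp only [Function.update_self, Function.update_of_ne hm, Function.update_of_ne hn,
      Function.update_of_ne hmn]
    refine ⟨fun h x y hxy ↦ ?_, fun h x _ y _ ↦ h x y⟩
    obtain ⟨hx, hy⟩ := pair_mem_iff.1 (𝕄.transitive _ (hv k) _ hxy)
    exact h x hx y hy hxy

theorem setOf_mem_cls {P : ZFSet → Prop} (hP : 𝕄.Definable fun v ↦ P (v 0)) :
    {x | x ∈ 𝕄.M ∧ P x} ∈ 𝕄.Cls := by
  obtain ⟨φ, Cs, hCs, hφ⟩ := hP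
  convert 𝕄.comprehension φ (fun _ ↦ ∅) Cs (fun _ ↦ 𝕄.empty_mem) hCs using 1
  ext x
  exact and_congr_right fun hx ↦ (hφ _ (update_mem (fun _ ↦ 𝕄.empty_mem) hx 0)).symm

theorem exists_cls_pair_mem_iff {Q : ZFSet → ZFSet → Prop}
    (hQ : 𝕄.Definable fun v ↦ Q (v 1) (v 2)) :
    ∃ C ∈ 𝕄.Cls, ∀ x ∈ 𝕄.M, ∀ y ∈ 𝕄.M, x.pair y ∈ C ↔ Q x y := by
  have hpair : 𝕄.Definable fun v ↦ ∃ x ∈ 𝕄.M, ∃ y ∈ 𝕄.M, v 0 = x.pair y ∧ Q x y :=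
    ((((eq_pair 0 1 2).and hQ).ex 2).ex 1).congr fun v _ ↦ by simp
  refine ⟨_, setOf_mem_cls (P := fun z ↦ ∃ x ∈ 𝕄.M, ∃ y ∈ 𝕄.M, z = x.pair y ∧ Q x y) hpair,
    fun x hx y hy ↦ ?_⟩
  simp [pair_mem_iff, hx, hy]

end Definable

theorem zimage_mem {Q : ZFSet → ZFSet → Prop} (hQ : 𝕄.Definable fun v ↦ Q (v 1) (v 2))
    {f : ZFSet → ZFSet} {a : ZFSet} (ha : a ∈ 𝕄.M) (hf : ∀ x ∈ a, f x ∈ 𝕄.M)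
    (hQf : ∀ x ∈ a, ∀ y ∈ 𝕄.M, Q x y ↔ f x = y) : zimage f a ∈ 𝕄.M := by
  obtain ⟨C, hC, hCQ⟩ := hQ.exists_cls_pair_mem_iff
  have hCf : ∀ x ∈ a, ∀ y ∈ 𝕄.M, x.pair y ∈ C ↔ f x = y := fun x hx y hy ↦
    (hCQ x (𝕄.transitive a ha x hx) y hy).trans (hQf x hx y hy)
  obtain ⟨b, hb, hab⟩ := 𝕄.collection C hC a ha fun x hx ↦
    ⟨f x, hf x hx, (hCf x hx _ (hf x hx)).2 rfl⟩
  have himage : 𝕄.Definable fun v ↦ ∃ x ∈ a, x.pair (v 0) ∈ C :=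
    (((Definable.pair_mem_cls hC 1 0).exists_mem 2 1).update_const ha 2).congr fun v _ ↦ by simp
  obtain ⟨c, hc, hcb⟩ := 𝕄.separation {y | y ∈ 𝕄.M ∧ ∃ x ∈ a, x.pair y ∈ C}
    (Definable.setOf_mem_cls himage) b hb
  suffices zimage f a = c from this ▸ hc
  ext y
  rw [mem_zimage, hcb]
  constructor
  · rintro ⟨x, hx, rfl⟩
    obtain ⟨y, hy, hxy⟩ := hab x hx
    obtain rfl := (hCf x hx y (𝕄.transitive b hb y hy)).1 hxy
    exact ⟨hy, hf x hx, x, hx, hxy⟩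
  · rintro ⟨-, hy, x, hx, hxy⟩
    exact ⟨x, hx, (hCf x hx y hy).1 hxy⟩

end GBModel

/-! ### Check names -/

theorem rank_lt_of_pair_mem {τ p σ : ZFSet} (h : τ.pair p ∈ σ) : τ.rank < σ.rank :=
  calc τ.rank < ({τ} : ZFSet).rank := ZFSet.rank_lt_of_mem (ZFSet.mem_singleton.2 rfl)
    _ < (τ.pair p).rank := ZFSet.rank_lt_of_mem (by simp [ZFSet.pair])
    _ < σ.rank := ZFSet.rank_lt_of_mem h

theorem isName_iff {S : Set ZFSet} {σ : ZFSet} :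
    IsName S σ ↔ ∀ x ∈ σ, ∃ τ p : ZFSet, x = τ.pair p ∧ p ∈ S ∧ IsName S τ := by
  rw [IsName, IsNameAux]
  refine forall₂_congr fun x hx ↦ exists₂_congr fun τ p ↦ and_congr_right fun hxτ ↦
    and_congr_right fun _ ↦ ?_
  have hτ : τ.rank < σ.rank := rank_lt_of_pair_mem (hxτ ▸ hx)
  exact exists_prop_of_true hτ

theorem mem_nameEval {G : Set ZFSet} {σ y : ZFSet} :
    y ∈ nameEval G σ ↔ ∃ τ, ∃ p ∈ G, τ.pair p ∈ σ ∧ y = nameEval G τ := by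
  rw [nameEval, nameEvalAux, mem_zimage]
  constructor
  · rintro ⟨τ, hτ, rfl⟩
    obtain ⟨-, p, hp, hτp⟩ := ZFSet.mem_sep.1 hτ
    exact ⟨τ, p, hp, hτp, dif_pos (rank_lt_of_pair_mem hτp)⟩
  · rintro ⟨τ, p, hp, hτp, rfl⟩
    have hτ : τ ∈ (⋃₀ ⋃₀ σ : ZFSet) :=
      ZFSet.mem_sUnion.2 ⟨{τ}, ZFSet.mem_sUnion.2 ⟨_, hτp, by simp [ZFSet.pair]⟩, by simp⟩
    exact ⟨τ, ZFSet.mem_sep.2 ⟨hτ, p, hp, hτp⟩, dif_pos (rank_lt_of_pair_mem hτp)⟩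

/-- The canonical name `x̌ = {⟨y̌, 𝟙⟩ | y ∈ x}` for the set `x`. -/
def checkName (one x : ZFSet) : ZFSet :=
  ZFSet.range fun y : {y // y ∈ x} ↦ (checkName one y).pair one
termination_by x
decreasing_by exact y.2

section CheckName

variable {one x : ZFSet}

theorem mem_checkName {t : ZFSet} :
    t ∈ checkName one x ↔ ∃ y ∈ x, t = (checkName one y).pair one := by
  rw [checkName]
  simp [eq_comm]

theorem checkName_eq_zimage :
    checkName one x = zimage (fun y ↦ (checkName one y).pair one) x := by
  ext t
  simp only [mem_checkName, mem_zimage, eq_comm]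

theorem isName_checkName {S : Set ZFSet} (hone : one ∈ S) (x : ZFSet) :
    IsName S (checkName one x) := by
  induction x using ZFSet.inductionOn with | _ x ih
  refine isName_iff.2 fun t ht ↦ ?_
  obtain ⟨y, hy, rfl⟩ := mem_checkName.1 ht
  exact ⟨_, _, rfl, hone, ih y hy⟩

theorem nameEval_checkName {G : Set ZFSet} (hone : one ∈ G) (x : ZFSet) :
    nameEval G (checkName one x) = x := by
  induction x using ZFSet.inductionOn with | _ x ih
  ext z
  rw [mem_nameEval]
  constructor
  · rintro ⟨τ, p, -, hτp, rfl⟩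
    obtain ⟨y, hy, heq⟩ := mem_checkName.1 hτp
    obtain ⟨rfl, rfl⟩ := ZFSet.pair_inj.1 heq
    exact (ih y hy).symm ▸ hy
  · exact fun hz ↦ ⟨_, one, hone, mem_checkName.2 ⟨z, hz, rfl⟩, (ih z hz).symm⟩

/-- `f` is a part of the graph of `x ↦ x̌` whose domain is transitive. Such sets witness the
recursion defining `x̌` inside a model. Elements of `f` that are not pairs are ignored. -/
def IsCheckApprox (one f : ZFSet) : Prop :=
  ∀ u v : ZFSet, u.pair v ∈ f →
    v = checkName one u ∧ ∀ w ∈ u, w.pair (checkName one w) ∈ f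

theorem isCheckApprox_iff {f : ZFSet} :
    IsCheckApprox one f ↔ ∀ u v : ZFSet, u.pair v ∈ f →
      (∀ w ∈ u, ∃ s : ZFSet, w.pair s ∈ f ∧ s.pair one ∈ v) ∧
        ∀ t ∈ v, ∃ w ∈ u, ∃ s : ZFSet, w.pair s ∈ f ∧ t = s.pair one := by
  constructor
  · intro hf u v huv
    obtain ⟨rfl, hu⟩ := hf u v huv
    refine ⟨fun w hw ↦ ⟨_, hu w hw, mem_checkName.2 ⟨w, hw, rfl⟩⟩, fun t ht ↦ ?_⟩
    obtain ⟨w, hw, rfl⟩ := mem_checkName.1 ht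
    exact ⟨w, hw, _, hu w hw, rfl⟩
  · intro hf u
    induction u using ZFSet.inductionOn with | _ u ih
    intro v huv
    obtain ⟨hforth, hback⟩ := hf u v huv
    refine ⟨?_, fun w hw ↦ ?_⟩
    · ext t
      rw [mem_checkName]
      constructor
      · intro ht
        obtain ⟨w, hw, s, hws, rfl⟩ := hback t ht
        exact ⟨w, hw, by rw [(ih w hw s hws).1]⟩
      · rintro ⟨w, hw, rfl⟩
        obtain ⟨s, hws, hs⟩ := hforth w hw
        exact (ih w hw s hws).1 ▸ hs
    · obtain ⟨s, hws, -⟩ := hforth w hw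
      exact (ih w hw s hws).1 ▸ hws

theorem IsCheckApprox.sUnion {F : ZFSet} (hF : ∀ f ∈ F, IsCheckApprox one f) :
    IsCheckApprox one (⋃₀ F : ZFSet) := by
  intro u v huv
  obtain ⟨f, hf, huvf⟩ := ZFSet.mem_sUnion.1 huv
  obtain ⟨hv, hu⟩ := hF f hf u v huvf
  exact ⟨hv, fun w hw ↦ ZFSet.mem_sUnion_of_mem (hu w hw) hf⟩

theorem IsCheckApprox.insert {f : ZFSet} (hf : IsCheckApprox one f)
    (hx : ∀ w ∈ x, w.pair (checkName one w) ∈ f) :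
    IsCheckApprox one (insert (x.pair (checkName one x)) f) := by
  intro u v huv
  rcases ZFSet.mem_insert_iff.1 huv with heq | huv
  · obtain ⟨rfl, rfl⟩ := ZFSet.pair_inj.1 heq
    exact ⟨rfl, fun w hw ↦ ZFSet.mem_insert_of_mem _ (hx w hw)⟩
  · obtain ⟨hv, hu⟩ := hf u v huv
    exact ⟨hv, fun w hw ↦ ZFSet.mem_insert_of_mem _ (hu w hw)⟩

namespace GBModel

variable {𝕄 : GBModel}

theorem definable_isCheckApprox (hone : one ∈ 𝕄.M) (i : ℕ) :
    𝕄.Definable fun v ↦ IsCheckApprox one (v i) := by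
  have hforth : 𝕄.Definable fun v ↦
      ∀ w ∈ v (i + 1), ∃ s : ZFSet, w.pair s ∈ v i ∧ s.pair one ∈ v (i + 2) :=
    (((Definable.pair_mem (i + 4) (i + 5) (i + 2)).exists_pair_mem (i + 3) i (i + 4)).forall_mem
      (i + 1) (i + 3)).update_const hone (i + 5) |>.congr fun v _ ↦ by simp
  have hback : 𝕄.Definable fun v ↦
      ∀ t ∈ v (i + 2), ∃ w ∈ v (i + 1), ∃ s : ZFSet, w.pair s ∈ v i ∧ t = s.pair one :=
    ((((Definable.eq_pair (i + 6) (i + 4) (i + 5)).exists_pair_mem (i + 3) i (i + 4)).exists_mem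
      (i + 1) (i + 3)).forall_mem (i + 2) (i + 6)).update_const hone (i + 5)
      |>.congr fun v _ ↦ by simp
  exact ((hforth.and hback).forall_pair_mem i (i + 1) (i + 2)).congr fun v _ ↦ by
    simp [isCheckApprox_iff]

theorem exists_isCheckApprox_forall_mem (hone : one ∈ 𝕄.M) (hx : x ∈ 𝕄.M)
    (h : ∀ w ∈ x, ∃ f ∈ 𝕄.M, IsCheckApprox one f ∧ w.pair (checkName one w) ∈ f) :
    ∃ f ∈ 𝕄.M, IsCheckApprox one f ∧ ∀ w ∈ x, w.pair (checkName one w) ∈ f := by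
  let Q (w f : ZFSet) : Prop := IsCheckApprox one f ∧ ∃ s : ZFSet, w.pair s ∈ f
  have hQ : 𝕄.Definable fun v ↦ Q (v 1) (v 2) :=
    (definable_isCheckApprox hone 2).and <|
      ((Definable.eq 0 0).exists_pair_mem 1 2 0).congr fun v _ ↦ by simp
  obtain ⟨C, hC, hCQ⟩ := hQ.exists_cls_pair_mem_iff
  obtain ⟨b, hb, hxb⟩ := 𝕄.collection C hC x hx fun w hw ↦ by
    obtain ⟨f, hf, hfa, hwf⟩ := h w hw
    exact ⟨f, hf, (hCQ w (𝕄.transitive x hx w hw) f hf).2 ⟨hfa, _, hwf⟩⟩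
  obtain ⟨c, hc, hcb⟩ := 𝕄.separation _ (definable_isCheckApprox hone 0).setOf_mem_cls b hb
  refine ⟨_, 𝕄.sUnion_mem c hc, .sUnion fun f hf ↦ ((hcb f).1 hf).2.2, fun w hw ↦ ?_⟩
  obtain ⟨f, hfb, hwf⟩ := hxb w hw
  have hf : f ∈ 𝕄.M := 𝕄.transitive b hb f hfb
  obtain ⟨hfa, s, hws⟩ := (hCQ w (𝕄.transitive x hx w hw) f hf).1 hwf
  exact ZFSet.mem_sUnion_of_mem ((hfa w s hws).1 ▸ hws) ((hcb f).2 ⟨hfb, hf, hfa⟩)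

theorem checkName_mem_of_isCheckApprox (hone : one ∈ 𝕄.M) (hx : x ∈ 𝕄.M) {f : ZFSet}
    (hf : f ∈ 𝕄.M) (hfa : IsCheckApprox one f)
    (hxf : ∀ w ∈ x, w.pair (checkName one w) ∈ f) : checkName one x ∈ 𝕄.M := by
  let Q (w t : ZFSet) : Prop := ∃ s : ZFSet, w.pair s ∈ f ∧ t = s.pair one
  have hQ : 𝕄.Definable fun v ↦ Q (v 1) (v 2) :=
    (((Definable.eq_pair 2 3 4).exists_pair_mem 1 5 3).update_const hone 4).update_const hf 5
      |>.congr fun v _ ↦ by simp [Q]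
  rw [checkName_eq_zimage]
  refine zimage_mem hQ hx (fun w hw ↦ ?_) fun w hw t _ ↦ ⟨?_, ?_⟩
  · have hpair := pair_mem_iff.1 (𝕄.transitive f hf _ (hxf w hw))
    exact pair_mem_iff.2 ⟨hpair.2, hone⟩
  · rintro ⟨s, hws, rfl⟩
    rw [(hfa w s hws).1]
  · rintro rfl
    exact ⟨_, hxf w hw, rfl⟩

theorem exists_isCheckApprox (hone : one ∈ 𝕄.M) (hx : x ∈ 𝕄.M) :
    ∃ f ∈ 𝕄.M, IsCheckApprox one f ∧ x.pair (checkName one x) ∈ f := by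
  induction x using ZFSet.inductionOn with | _ x ih
  obtain ⟨f, hf, hfa, hxf⟩ := exists_isCheckApprox_forall_mem hone hx fun w hw ↦
    ih w hw (𝕄.transitive x hx w hw)
  have hcheck : checkName one x ∈ 𝕄.M := checkName_mem_of_isCheckApprox hone hx hf hfa hxf
  exact ⟨_, insert_mem (pair_mem_iff.2 ⟨hx, hcheck⟩) hf, hfa.insert hxf, ZFSet.mem_insert _ _⟩

theorem checkName_mem (hone : one ∈ 𝕄.M) (hx : x ∈ 𝕄.M) : checkName one x ∈ 𝕄.M := by
  obtain ⟨f, hf, -, hxf⟩ := exists_isCheckApprox hone hx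
  exact (pair_mem_iff.1 (𝕄.transitive f hf _ hxf)).2

theorem definable_eq_checkName (hone : one ∈ 𝕄.M) (i j : ℕ) :
    𝕄.Definable fun v ↦ v j = checkName one (v i) := by
  let n := i + j + 1
  refine (((definable_isCheckApprox hone n).and (.pair_mem i j n)).ex n).congr fun v hv ↦ ?_
  simp (disch := omega) only [Function.update_self, Function.update_of_ne]
  constructor
  · rintro ⟨f, -, hfa, hij⟩
    exact (hfa _ _ hij).1
  · intro hij
    rw [hij]
    exact exists_isCheckApprox hone (hv i)

end GBModel

/-- The canonical name `{⟨ǎ, a⟩ | a ∈ A}` for the set `G ∩ A`, where `A` is a set of conditions. -/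
def traceName (one A : ZFSet) : ZFSet :=
  zimage (fun a ↦ (checkName one a).pair a) A

variable {A : ZFSet}

theorem GBModel.traceName_mem {𝕄 : GBModel} (hone : one ∈ 𝕄.M) (hA : A ∈ 𝕄.M) :
    traceName one A ∈ 𝕄.M := by
  have hQ : 𝕄.Definable fun v ↦ (checkName one (v 1)).pair (v 1) = v 2 :=
    (((definable_eq_checkName hone 1 3).and (.eq_pair 2 3 1)).ex 3).congr fun v hv ↦ by
      simp [checkName_mem hone (hv 1), eq_comm]
  refine zimage_mem (Q := fun a y ↦ (checkName one a).pair a = y) hQ hA (fun a ha ↦ ?_)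
    fun a _ y _ ↦ Iff.rfl
  have haM : a ∈ 𝕄.M := 𝕄.transitive A hA a ha
  exact pair_mem_iff.2 ⟨checkName_mem hone haM, haM⟩

theorem isName_traceName {S : Set ZFSet} (hone : one ∈ S) (hA : ∀ a ∈ A, a ∈ S) :
    IsName S (traceName one A) := by
  refine isName_iff.2 fun t ht ↦ ?_
  obtain ⟨a, ha, rfl⟩ := mem_zimage.1 ht
  exact ⟨_, a, rfl, hA a ha, isName_checkName hone a⟩

theorem nameEval_traceName {G : Set ZFSet} (hone : one ∈ G) :
    nameEval G (traceName one A) = A.sep (· ∈ G) := by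
  ext z
  rw [mem_nameEval, ZFSet.mem_sep]
  constructor
  · rintro ⟨τ, p, hp, hτp, rfl⟩
    obtain ⟨a, ha, heq⟩ := mem_zimage.1 hτp
    obtain ⟨rfl, rfl⟩ := ZFSet.pair_inj.1 heq
    rw [nameEval_checkName hone]
    exact ⟨ha, hp⟩
  · rintro ⟨hzA, hzG⟩
    exact ⟨_, z, hzG, mem_zimage.2 ⟨z, hzA, rfl⟩, (nameEval_checkName hone z).symm⟩

end CheckName

/-! ### Generic filters -/

section Filter

variable {S : Set ZFSet} {le : ZFSet → ZFSet → Prop}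

/-- The conditions below `p`. This is not a bare subtype, which would inherit the inclusion order
of `ZFSet`. -/
def Cone (S : Set ZFSet) (le : ZFSet → ZFSet → Prop) (p : ZFSet) : Type _ :=
  {q // q ∈ S ∧ le q p}

/-- The reverse of the forcing order on `Cone S le p`, for which filters become ideals. -/
abbrev Cone.preorder (hrefl : ∀ p ∈ S, le p p)
    (htrans : ∀ p q r : ZFSet, le p q → le q r → le p r) (p : ZFSet) :
    Preorder (Cone S le p) where
  le q r := le r.1 q.1
  le_refl q := hrefl q.1 q.2.1
  le_trans _ _ _ hqr hrs := htrans _ _ _ hrs hqr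

theorem exists_isFilterOn_forall_inter_nonempty (hrefl : ∀ p ∈ S, le p p)
    (htrans : ∀ p q r : ZFSet, le p q → le q r → le p r) {p : ZFSet} (hp : p ∈ S)
    {𝒟 : Set (Set ZFSet)} (h𝒟 : 𝒟.Countable)
    (hdense : ∀ D ∈ 𝒟, ∀ q ∈ S, le q p → ∃ r ∈ S, r ∈ D ∧ le r q) :
    ∃ G, IsFilterOn S le G ∧ p ∈ G ∧ ∀ D ∈ 𝒟, (G ∩ D).Nonempty := by
  let _ : Preorder (Cone S le p) := Cone.preorder hrefl htrans p
  let _ : Encodable 𝒟 := h𝒟.toEncodable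
  let cofinal (D : 𝒟) : Order.Cofinal (Cone S le p) :=
    { carrier := {q | q.1 ∈ D.1}
      isCofinal := fun q ↦ by
        obtain ⟨r, hr, hrD, hrq⟩ := hdense D.1 D.2 q.1 q.2.1 q.2.2
        exact ⟨⟨r, hr, htrans _ _ _ hrq q.2.2⟩, hrD, hrq⟩ }
  let top : Cone S le p := ⟨p, hp, hrefl p hp⟩
  let I := Order.idealOfCofinals top cofinal
  have hpI : top ∈ I := Order.mem_idealOfCofinals top cofinal
  refine ⟨{q | q ∈ S ∧ ∃ r ∈ I, le r.1 q}, ⟨fun _ hq ↦ hq.1, ⟨p, hp, _, hpI, hrefl p hp⟩,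
    ?_, ?_⟩, ⟨hp, _, hpI, hrefl p hp⟩, fun D hD ↦ ?_⟩
  · rintro q ⟨-, r, hr, hrq⟩ q' hq' hqq'
    exact ⟨hq', r, hr, htrans _ _ _ hrq hqq'⟩
  · rintro q ⟨-, r, hr, hrq⟩ q' ⟨-, r', hr', hrq'⟩
    obtain ⟨s, hs, hsr, hsr'⟩ := I.directed r hr r' hr'
    exact ⟨s.1, ⟨s.2.1, s, hs, hrefl _ s.2.1⟩, htrans _ _ _ hsr hrq, htrans _ _ _ hsr' hrq'⟩
  · obtain ⟨q, hqD, hqI⟩ := Order.cofinal_meets_idealOfCofinals top cofinal ⟨D, hD⟩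
    exact ⟨q.1, ⟨q.2.1, q, hqI, hrefl _ q.2.1⟩, hqD⟩

/-- The conditions that force `G ∩ A ≠ x` because of a single element of `A`. -/
def traceNeConditions (S : Set ZFSet) (le : ZFSet → ZFSet → Prop) (A x : ZFSet) : Set ZFSet :=
  {q | ∃ a ∈ A, (le q a ∧ a ∉ x) ∨ (¬ Compat S le q a ∧ a ∈ x)}

theorem exists_mem_traceNeConditions_le {q A : ZFSet} (hq : ¬ Decides S le q A) (x : ZFSet) :
    ∃ r ∈ S, r ∈ traceNeConditions S le A x ∧ le r q := by
  simp only [Decides, leStar, not_forall, not_or, not_not] at hq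
  obtain ⟨a, ha, ⟨r, hr, hrq, hra⟩, r', hr', hrq', hra'⟩ := hq
  by_cases hax : a ∈ x
  · exact ⟨r, hr, ⟨a, ha, .inr ⟨hra, hax⟩⟩, hrq⟩
  · exact ⟨r', hr', ⟨a, ha, .inl ⟨hra', hax⟩⟩, hrq'⟩

theorem IsFilterOn.sep_ne {G : Set ZFSet} (hG : IsFilterOn S le G) {A x : ZFSet}
    (hA : ∀ a ∈ A, a ∈ S) (hGx : (G ∩ traceNeConditions S le A x).Nonempty) :
    A.sep (· ∈ G) ≠ x := by
  obtain ⟨hGS, -, hup, hdir⟩ := hG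
  rintro rfl
  obtain ⟨q, hq, a, ha, ⟨hqa, hax⟩ | ⟨hqa, hax⟩⟩ := hGx
  · exact hax (ZFSet.mem_sep.2 ⟨ha, hup q hq a (hA a ha) hqa⟩)
  · obtain ⟨r, hr, hrq, hra⟩ := hdir q hq a (ZFSet.mem_sep.1 hax).2
    exact hqa ⟨r, hGS hr, hrq, hra⟩

end Filter

namespace ClassForcing

variable {𝕄 : GBModel} (F : ClassForcing 𝕄)

theorem one_mem_of_isFilterOn {G : Set ZFSet} (hG : IsFilterOn F.P F.le G) : F.one ∈ G := by
  obtain ⟨hGP, ⟨p, hp⟩, hup, -⟩ := hG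
  exact hup p hp F.one F.one_mem (F.le_one p (hGP hp))

theorem exists_isGeneric_sep_notMem {p A : ZFSet} (hp : p ∈ F.P) (hA : ∀ a ∈ A, a ∈ F.P)
    (hundecided : ∀ q ∈ F.P, F.le q p → ¬ Decides F.P F.le q A) :
    ∃ G, IsGeneric 𝕄 F.P F.le G ∧ A.sep (· ∈ G) ∉ 𝕄.M := by
  let 𝒟 := {D | D ∈ 𝕄.Cls ∧ DenseIn F.P F.le D} ∪ traceNeConditions F.P F.le A '' 𝕄.M
  have h𝒟 : 𝒟.Countable :=
    (𝕄.countable_Cls.mono fun _ hD ↦ hD.1).union (𝕄.countable_M.image _)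
  have hdense : ∀ D ∈ 𝒟, ∀ q ∈ F.P, F.le q p → ∃ r ∈ F.P, r ∈ D ∧ F.le r q := by
    rintro _ (⟨-, hDP, hD⟩ | ⟨x, -, rfl⟩) q hq hqp
    · obtain ⟨r, hr, hrq⟩ := hD q hq
      exact ⟨r, hDP hr, hr, hrq⟩
    · exact exists_mem_traceNeConditions_le (hundecided q hq hqp) x
  obtain ⟨G, hG, -, hGD⟩ :=
    exists_isFilterOn_forall_inter_nonempty F.le_refl F.le_trans hp h𝒟 hdense
  exact ⟨G, ⟨hG, fun D hD hDdense ↦ hGD D (.inl ⟨hD, hDdense⟩)⟩,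
    fun hM ↦ hG.sep_ne hA (hGD _ (.inr ⟨_, hM, rfl⟩)) rfl⟩

theorem sep_mem_mGen {A : ZFSet} (hAM : A ∈ 𝕄.M) (hA : ∀ a ∈ A, a ∈ F.P) {G : Set ZFSet}
    (hG : IsFilterOn F.P F.le G) : A.sep (· ∈ G) ∈ MGen 𝕄 F.P G :=
  ⟨traceName F.one A, GBModel.traceName_mem (𝕄.classes_sub _ F.P_cls F.one_mem) hAM,
    isName_traceName F.one_mem hA, nameEval_traceName (F.one_mem_of_isFilterOn hG)⟩

end ClassForcing

/-- If a notion of class forcing `ℙ` for a countable transitive model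
`𝕄 = ⟨M, 𝒞⟩` of `GB⁻` adds no new sets, then `ℙ` has the set decision property. -/
theorem no_new_sets_implies_set_decision
    (𝕄 : GBModel) (F : ClassForcing 𝕄)
    (hnonew : ∀ G : Set ZFSet, IsGeneric 𝕄 F.P F.le G → MGen 𝕄 F.P G = 𝕄.M) :
    SetDecisionProperty 𝕄 F := by
  intro p hp A hAM hA
  by_contra! hundecided
  obtain ⟨G, hG, hGA⟩ := F.exists_isGeneric_sep_notMem hp hA hundecided
  exact hGA (hnonew G hG ▸ F.sep_mem_mGen hAM hA hG.1)

end CF
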